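/- Let ω be a finite (signed) Radon measure on T² which also belongs to H^{-1}(T²), i.e. there exists C > 0 such that |∫ φ dω| ≤ C ‖φ‖_{H¹} for all smooth test functions φ. Then ω has no atoms: for every point x₀ ∈ T², ω({x₀}) = 0. -/

import Mathlib

open MeasureTheory Set

/-- The two-dimensional torus. -/
abbrev T2 : Type := AddCircle (1:ℝ) × AddCircle (1:ℝ)

/-- The projection from the plane to the torus. -/
noncomputable def q2 (p : ℝ × ℝ) : T2 := ((p.1 : AddCircle (1:ℝ)), (p.2 : AddCircle (1:ℝ)))

/-- The `H¹` norm of a (periodic) function on the plane, computed over the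
fundamental domain `[0,1]²`. -/
noncomputable def H1norm (Φ : ℝ × ℝ → ℝ) : ℝ :=
  Real.sqrt (∫ p in Set.Icc ((0:ℝ), (0:ℝ)) (1, 1), ((Φ p)^2 + ‖fderiv ℝ Φ p‖^2))

open MeasureTheory Set Filter Topology

lemma shift_bound (g : ℝ → ℝ) (hg : ContinuousOn g (Set.Ici 0)) (hanti : AntitoneOn g (Set.Ici 0))
    (a : ℝ) :
    ∫ x in (0:ℝ)..1, g (Real.sin (Real.pi * (x - a)) ^ 2) ≤
      ∫ x in (-(1/2):ℝ)..(1/2), g (4 * x ^ 2) := by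
  have hper : Function.Periodic (fun x : ℝ => g (Real.sin (Real.pi * x) ^ 2)) 1 := by
    intro x
    simp only
    rw [mul_add, mul_one, Real.sin_add_pi, neg_sq]
  have h1 : ∫ x in (0:ℝ)..1, g (Real.sin (Real.pi * (x - a)) ^ 2) =
      ∫ x in (0 - a:ℝ)..(1 - a), g (Real.sin (Real.pi * x) ^ 2) :=
    intervalIntegral.integral_comp_sub_right (fun x => g (Real.sin (Real.pi * x) ^ 2)) a
  have h2 := hper.intervalIntegral_add_eq (0 - a) (-(1/2))
  rw [h1, show (1 - a : ℝ) = 0 - a + 1 by ring, h2, show (-(1/2) + 1 : ℝ) = 1/2 by norm_num]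
  have c1 : Continuous (fun x : ℝ => g (Real.sin (Real.pi * x) ^ 2)) :=
    hg.comp_continuous (by fun_prop) (fun x => by simp only [Set.mem_Ici]; positivity)
  have c2 : Continuous (fun x : ℝ => g (4 * x ^ 2)) :=
    hg.comp_continuous (by fun_prop) (fun x => by simp only [Set.mem_Ici]; positivity)
  apply intervalIntegral.integral_mono_on (by norm_num) (c1.intervalIntegrable _ _)
    (c2.intervalIntegrable _ _)
  intro x hx
  apply hanti
  · simp only [Set.mem_Ici]; positivity
  · simp only [Set.mem_Ici]; positivity
  · have hp := Real.pi_pos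
    have h3 : 2 / Real.pi * |Real.pi * x| ≤ |Real.sin (Real.pi * x)| := by
      apply Real.mul_abs_le_abs_sin
      rw [abs_mul, abs_of_pos hp]
      have : |x| ≤ 1/2 := abs_le.2 ⟨hx.1, hx.2⟩
      nlinarith
    rw [abs_mul, abs_of_pos hp] at h3
    have h4 : 2 / Real.pi * (Real.pi * |x|) = 2 * |x| := by field_simp
    rw [h4] at h3
    have := pow_le_pow_left₀ (by positivity) h3 2
    rw [sq_abs, mul_pow, sq_abs] at this
    linarith

lemma step1 (a d : ℝ) (hd : 0 < d) :
    ∫ x in (0:ℝ)..1, 1 / (Real.sin (Real.pi * (x - a)) ^ 2 + d ^ 2) ≤ Real.pi / 2 * (1 / d) := by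
  have h := shift_bound (fun t => 1 / (t + d ^ 2))
    (by
      apply ContinuousOn.div (by fun_prop) (by fun_prop)
      intro t ht
      simp only [Set.mem_Ici] at ht
      positivity)
    (by
      intro s hs t ht hst
      simp only [Set.mem_Ici] at hs ht
      simp only
      gcongr) a
  refine h.trans ?_
  rw [intervalIntegral.integral_eq_sub_of_hasDerivAt
    (f := fun x => Real.arctan (2 * x / d) / (2 * d))]
  · have e1 : (2 * (1/2) / d : ℝ) = 1 / d := by ring
    have e2 : (2 * (-(1/2)) / d : ℝ) = - (1 / d) := by ring
    simp only [e1, e2, Real.arctan_neg]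
    have := (Real.arctan_lt_pi_div_two (1/d)).le
    have e3 : Real.arctan (1 / d) / (2 * d) - -Real.arctan (1 / d) / (2 * d)
      = Real.arctan (1/d) * (1 / d) := by field_simp; ring
    rw [e3]
    gcongr
  · intro x _
    have h1 : HasDerivAt (fun x : ℝ => 2 * x / d) (2 / d) x := by
      simpa using ((hasDerivAt_id x).const_mul 2).div_const d
    refine ((h1.arctan).div_const (2 * d)).congr_deriv ?_
    field_simp
    ring
  · apply Continuous.intervalIntegrable
    apply Continuous.div (by fun_prop) (by fun_prop)
    intro x
    positivity

lemma step2 (b e : ℝ) (he : 0 < e) :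
    ∫ x in (0:ℝ)..1, 1 / √(Real.sin (Real.pi * (x - b)) ^ 2 + e ^ 2) ≤ Real.arsinh (1 / e) := by
  have h := shift_bound (fun t => 1 / √(t + e ^ 2))
    (by
      apply ContinuousOn.div (by fun_prop) (by fun_prop)
      intro t ht
      simp only [Set.mem_Ici] at ht
      positivity)
    (by
      intro s hs t ht hst
      simp only [Set.mem_Ici] at hs ht
      simp only
      gcongr) b
  refine h.trans ?_
  rw [intervalIntegral.integral_eq_sub_of_hasDerivAt
    (f := fun x => Real.arsinh (2 * x / e) / 2)]
  · have e1 : (2 * (1/2) / e : ℝ) = 1 / e := by ring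
    have e2 : (2 * (-(1/2)) / e : ℝ) = - (1 / e) := by ring
    simp only [e1, e2, Real.arsinh_neg]
    linarith
  · intro x _
    have h1 : HasDerivAt (fun x : ℝ => 2 * x / e) (2 / e) x := by
      simpa using ((hasDerivAt_id x).const_mul 2).div_const e
    refine ((h1.arsinh).div_const 2).congr_deriv ?_
    have : √(4 * x ^ 2 + e ^ 2) = e * √(1 + (2 * x / e) ^ 2) := by
      rw [← Real.sqrt_sq he.le, ← Real.sqrt_mul (by positivity), Real.sqrt_sq he.le]
      congr 1
      field_simp
      ring
    rw [this]
    simp only [smul_eq_mul]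
    have : √(1 + (2 * x / e) ^ 2) ≠ 0 := by positivity
    field_simp
  · apply Continuous.intervalIntegrable
    apply Continuous.div (by fun_prop) (by fun_prop)
    intro x
    positivity

noncomputable def sq2 (a b : ℝ) (p : ℝ × ℝ) : ℝ :=
  Real.sin (Real.pi * (p.1 - a)) ^ 2 + Real.sin (Real.pi * (p.2 - b)) ^ 2

lemma sq2_nonneg (a b : ℝ) (p : ℝ × ℝ) : 0 ≤ sq2 a b p := by unfold sq2; positivity

lemma sq2_contDiff (a b : ℝ) : ContDiff ℝ (⊤ : ℕ∞) (sq2 a b) := by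
  unfold sq2; fun_prop

lemma inv_cont (a b e : ℝ) (he : 0 < e) : Continuous (fun p => 1 / (sq2 a b p + e ^ 2)) := by
  apply Continuous.div (by fun_prop) (((sq2_contDiff a b).continuous).add continuous_const)
  intro p
  have := sq2_nonneg a b p
  have h2 : 0 < e ^ 2 := by positivity
  exact (add_pos_of_nonneg_of_pos this h2).ne'

lemma step3 (a b e : ℝ) (he : 0 < e) :
    ∫ p in Set.Icc ((0:ℝ), (0:ℝ)) (1, 1), 1 / (sq2 a b p + e ^ 2) ≤
      Real.pi / 2 * Real.arsinh (1 / e) := by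
  have hc := inv_cont a b e he
  have hint : IntegrableOn (fun p => 1 / (sq2 a b p + e ^ 2)) (Set.Icc ((0:ℝ), (0:ℝ)) (1, 1)) :=
    hc.continuousOn.integrableOn_compact isCompact_Icc
  rw [← Set.Icc_prod_Icc] at hint ⊢
  have hsw : ∫ p in Set.Icc (0:ℝ) 1 ×ˢ Set.Icc (0:ℝ) 1, 1 / (sq2 a b p + e ^ 2) =
      ∫ x in Set.Icc (0:ℝ) 1, ∫ y in Set.Icc (0:ℝ) 1, 1 / (sq2 a b (x, y) + e ^ 2) :=
    setIntegral_prod _ hint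
  rw [hsw, integral_Icc_eq_integral_Ioc, ← intervalIntegral.integral_of_le zero_le_one]
  have hin : ∀ x : ℝ, ∫ y in Set.Icc (0:ℝ) 1, 1 / (sq2 a b (x, y) + e ^ 2) ≤
      Real.pi / 2 * (1 / √(Real.sin (Real.pi * (x - a)) ^ 2 + e ^ 2)) := by
    intro x
    rw [integral_Icc_eq_integral_Ioc, ← intervalIntegral.integral_of_le zero_le_one]
    have := step1 b (√(Real.sin (Real.pi * (x - a)) ^ 2 + e ^ 2)) (by positivity)
    rw [Real.sq_sqrt (by positivity)] at this
    refine le_trans (le_of_eq ?_) this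
    congr 1
    funext y
    congr 1
    simp only [sq2]
    ring
  have hI : IntervalIntegrable (fun x => ∫ y in Set.Icc (0:ℝ) 1, 1 / (sq2 a b (x, y) + e ^ 2))
      volume 0 1 := by
    rw [intervalIntegrable_iff_integrableOn_Icc_of_le zero_le_one]
    have h : Integrable (fun p => 1 / (sq2 a b p + e ^ 2))
      ((volume.restrict (Set.Icc (0:ℝ) 1)).prod (volume.restrict (Set.Icc (0:ℝ) 1))) := by
      rw [Measure.prod_restrict]; exact hint
    exact h.integral_prod_left
  have hR : Continuous (fun x : ℝ => Real.pi / 2 *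
      (1 / √(Real.sin (Real.pi * (x - a)) ^ 2 + e ^ 2))) := by
    apply continuous_const.mul
    apply Continuous.div (by fun_prop) (by fun_prop)
    intro x
    positivity
  refine (intervalIntegral.integral_mono_on zero_le_one hI (hR.intervalIntegrable _ _)
    (fun x _ => hin x)).trans ?_
  rw [intervalIntegral.integral_const_mul]
  have := step2 a e he
  gcongr

/-- The normalising logarithm. -/
noncomputable def MM (e : ℝ) : ℝ := Real.log (e ^ 2 + 1) - Real.log (e ^ 2)

noncomputable def FF (e t : ℝ) : ℝ := (Real.log (t + e ^ 2 + 1) - Real.log (t + e ^ 2)) / MM e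

lemma MM_pos {e : ℝ} (he : 0 < e) : 0 < MM e := by
  unfold MM
  have := Real.log_lt_log (show 0 < e ^ 2 by positivity) (show e ^ 2 < e ^ 2 + 1 by linarith)
  linarith

lemma arsinh_le {e : ℝ} (he : 0 < e) : Real.arsinh (1 / e) ≤ Real.log 2 + MM e / 2 := by
  have h1 : MM e / 2 = Real.log (√(1 + (1 / e) ^ 2)) := by
    rw [Real.log_sqrt (by positivity)]
    unfold MM
    rw [← Real.log_div (by positivity) (by positivity)]
    congr 2
    field_simp
  rw [h1, ← Real.log_mul (by norm_num) (by positivity), Real.arsinh]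
  apply Real.log_le_log (by positivity)
  have : 1 / e ≤ √(1 + (1 / e) ^ 2) := by
    apply Real.le_sqrt_of_sq_le
    linarith
  linarith

lemma FF_sq_le {e t : ℝ} (he : 0 < e) (ht : 0 ≤ t) :
    FF e t ^ 2 ≤ 4 / MM e ^ 2 * (1 / (t + e ^ 2)) := by
  have hM := MM_pos he
  have hu : 0 < t + e ^ 2 := by positivity
  have h0 : 0 ≤ Real.log (t + e ^ 2 + 1) - Real.log (t + e ^ 2) := by
    have := Real.log_le_log hu (show t + e ^ 2 ≤ t + e ^ 2 + 1 by linarith)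
    linarith
  have h1 : Real.log (t + e ^ 2 + 1) - Real.log (t + e ^ 2) ≤ 2 * √(1 / (t + e ^ 2)) := by
    rw [← Real.log_div (by positivity) (by positivity)]
    set r := √(1 / (t + e ^ 2)) with hr
    have hr0 : 0 ≤ r := Real.sqrt_nonneg _
    have hr2 : r ^ 2 = 1 / (t + e ^ 2) := Real.sq_sqrt (by positivity)
    have e1 : (t + e ^ 2 + 1) / (t + e ^ 2) = 1 + r ^ 2 := by rw [hr2]; field_simp
    rw [e1]
    have h2 : Real.log (1 + r ^ 2) ≤ Real.log ((1 + r) ^ 2) := by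
      apply Real.log_le_log (by positivity)
      nlinarith
    rw [Real.log_pow] at h2
    have h3 := Real.log_le_sub_one_of_pos (show 0 < 1 + r by positivity)
    push_cast at h2
    linarith
  have h2 := pow_le_pow_left₀ h0 h1 2
  rw [mul_pow, Real.sq_sqrt (by positivity)] at h2
  unfold FF
  rw [div_pow, div_mul_eq_mul_div]
  gcongr
  linarith

lemma FF_contDiffAt {e t : ℝ} (he : 0 < e) (ht : 0 ≤ t) : ContDiffAt ℝ (⊤ : ℕ∞) (FF e) t := by
  unfold FF
  apply ContDiffAt.div_const
  apply ContDiffAt.sub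
  · exact ContDiffAt.log (by fun_prop) (by positivity)
  · exact ContDiffAt.log (by fun_prop) (by positivity)

lemma FF_hasDeriv {e t : ℝ} (he : 0 < e) (ht : 0 ≤ t) :
    HasDerivAt (FF e) ((1 / (t + e ^ 2 + 1) - 1 / (t + e ^ 2)) / MM e) t := by
  unfold FF
  have h1 : HasDerivAt (fun t : ℝ => t + e ^ 2) 1 t := (hasDerivAt_id t).add_const _
  exact (((h1.add_const 1).log (by positivity)).sub (h1.log (by positivity))).div_const _

lemma FF_deriv_sq {e t : ℝ} (he : 0 < e) (ht : 0 ≤ t) :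
    ((1 / (t + e ^ 2 + 1) - 1 / (t + e ^ 2)) / MM e) ^ 2 * t ≤
      1 / MM e ^ 2 * (1 / (t + e ^ 2)) := by
  have hM := MM_pos he
  have hu : 0 < t + e ^ 2 := by positivity
  have htu : t ≤ t + e ^ 2 := by nlinarith
  set u := t + e ^ 2
  have h1 : (1 / (u + 1) - 1 / u) ^ 2 ≤ (1 / u) ^ 2 := by
    have hp : 0 < 1 / (u + 1) := by positivity
    have hle : 1 / (u + 1) ≤ 1 / u := by gcongr; linarith
    nlinarith
  rw [div_pow]
  calc (1 / (u + 1) - 1 / u) ^ 2 / MM e ^ 2 * t ≤ (1 / u) ^ 2 / MM e ^ 2 * u := by gcongr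
    _ = 1 / MM e ^ 2 * (1 / u) := by field_simp

lemma sq2_fderiv (a b : ℝ) (p : ℝ × ℝ) : ‖fderiv ℝ (sq2 a b) p‖ ^ 2 ≤
    8 * Real.pi ^ 2 * sq2 a b p := by
  have hd : ∀ c x : ℝ, HasDerivAt (fun x : ℝ => Real.sin (Real.pi * (x - c)) ^ 2)
      (2 * Real.sin (Real.pi * (x - c)) * (Real.cos (Real.pi * (x - c)) * Real.pi)) x := by
    intro c x
    have h1 : HasDerivAt (fun x : ℝ => Real.pi * (x - c)) Real.pi x := by
      simpa using ((hasDerivAt_id x).sub_const c).const_mul Real.pi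
    refine ((h1.sin).pow 2).congr_deriv ?_
    simp
  have hb : ∀ c x : ℝ, |2 * Real.sin (Real.pi * (x - c)) *
      (Real.cos (Real.pi * (x - c)) * Real.pi)| ≤ 2 * Real.pi * |Real.sin (Real.pi * (x - c))| := by
    intro c x
    rw [abs_mul, abs_mul, abs_mul, abs_of_pos Real.pi_pos, abs_of_pos (show (0:ℝ) < 2 by norm_num)]
    have h1 := Real.abs_cos_le_one (Real.pi * (x - c))
    have h2 : 0 ≤ 2 * Real.pi * |Real.sin (Real.pi * (x - c))| := by positivity
    nlinarith
  have h : HasFDerivAt (sq2 a b) _ p :=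
    ((hd a p.1).comp_hasFDerivAt p (hasFDerivAt_fst (𝕜 := ℝ) (p := p))).add
    ((hd b p.2).comp_hasFDerivAt p (hasFDerivAt_snd (𝕜 := ℝ) (p := p)))
  rw [h.fderiv]
  have hn : ∀ A B : ℝ, ‖A • ContinuousLinearMap.fst ℝ ℝ ℝ + B • ContinuousLinearMap.snd ℝ ℝ ℝ‖ ≤
      |A| + |B| := by
    intro A B
    refine (norm_add_le _ _).trans ?_
    rw [norm_smul, norm_smul, Real.norm_eq_abs, Real.norm_eq_abs]
    have h1 := ContinuousLinearMap.norm_fst_le ℝ ℝ ℝ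
    have h2 := ContinuousLinearMap.norm_snd_le ℝ ℝ ℝ
    have h3 := mul_le_mul_of_nonneg_left h1 (abs_nonneg A)
    have h4 := mul_le_mul_of_nonneg_left h2 (abs_nonneg B)
    linarith
  have h5 := (hn _ _).trans (add_le_add (hb a p.1) (hb b p.2))
  have h6 := pow_le_pow_left₀ (norm_nonneg _) h5 2
  refine h6.trans ?_
  unfold sq2
  rw [← sq_abs (Real.sin (Real.pi * (p.1 - a))), ← sq_abs (Real.sin (Real.pi * (p.2 - b)))]
  have := mul_nonneg (sq_nonneg Real.pi)
    (sq_nonneg (|Real.sin (Real.pi * (p.1 - a))| - |Real.sin (Real.pi * (p.2 - b))|))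
  nlinarith

noncomputable def Phi (a b e : ℝ) (p : ℝ × ℝ) : ℝ := FF e (sq2 a b p)

lemma Phi_contDiff (a b e : ℝ) (he : 0 < e) : ContDiff ℝ (⊤ : ℕ∞) (Phi a b e) := by
  rw [contDiff_iff_contDiffAt]
  intro p
  exact (FF_contDiffAt he (sq2_nonneg a b p)).comp p (sq2_contDiff a b).contDiffAt

lemma Phi_integrand (a b e : ℝ) (he : 0 < e) (p : ℝ × ℝ) :
    (Phi a b e p) ^ 2 + ‖fderiv ℝ (Phi a b e) p‖ ^ 2 ≤
      (4 + 8 * Real.pi ^ 2) / MM e ^ 2 * (1 / (sq2 a b p + e ^ 2)) := by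
  have ht := sq2_nonneg a b p
  have h1 : Phi a b e p ^ 2 ≤ _ := FF_sq_le he ht
  have hd : HasFDerivAt (Phi a b e) _ p := (FF_hasDeriv he ht).comp_hasFDerivAt p
    (((sq2_contDiff a b).differentiable (by simp)) p).hasFDerivAt
  rw [hd.fderiv, norm_smul, mul_pow, Real.norm_eq_abs, sq_abs]
  have h2 := sq2_fderiv a b p
  have h3 := FF_deriv_sq he ht
  have h4 := mul_le_mul_of_nonneg_left h2
    (sq_nonneg ((1 / (sq2 a b p + e ^ 2 + 1) - 1 / (sq2 a b p + e ^ 2)) / MM e))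
  have h5 := mul_le_mul_of_nonneg_left h3 (show 0 ≤ 8 * Real.pi ^ 2 by positivity)
  calc _ ≤ 4 / MM e ^ 2 * (1 / (sq2 a b p + e ^ 2)) +
      8 * Real.pi ^ 2 * (1 / MM e ^ 2 * (1 / (sq2 a b p + e ^ 2))) := by linarith
    _ = _ := by ring

lemma H1_bound (a b e : ℝ) (he : 0 < e) : H1norm (Phi a b e) ≤
    √((4 + 8 * Real.pi ^ 2) / MM e ^ 2 * (Real.pi / 2 * (Real.log 2 + MM e / 2))) := by
  unfold H1norm
  apply Real.sqrt_le_sqrt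
  have hs := Phi_contDiff a b e he
  have hc : Continuous (fun p => (Phi a b e p) ^ 2 + ‖fderiv ℝ (Phi a b e) p‖ ^ 2) :=
    (hs.continuous.pow 2).add (((hs.continuous_fderiv (by simp)).norm).pow 2)
  have hc2 : Continuous (fun p => (4 + 8 * Real.pi ^ 2) / MM e ^ 2 * (1 / (sq2 a b p + e ^ 2))) :=
    continuous_const.mul (inv_cont a b e he)
  refine (integral_mono (hc.continuousOn.integrableOn_compact isCompact_Icc)
    (hc2.continuousOn.integrableOn_compact isCompact_Icc) (Phi_integrand a b e he)).trans ?_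
  rw [integral_const_mul]
  have h3 := step3 a b e he
  have h4 := arsinh_le he
  gcongr
  exact h3.trans (by gcongr)

lemma MM_tendsto : Tendsto (fun n : ℕ => MM (1 / ((n:ℝ) + 1))) atTop atTop := by
  have h1 : Tendsto (fun n : ℕ => Real.log ((n:ℝ))) atTop atTop :=
    Real.tendsto_log_atTop.comp tendsto_natCast_atTop_atTop
  refine tendsto_atTop_mono' _ ?_ h1
  filter_upwards [eventually_gt_atTop 0] with n hn
  have hn' : (0:ℝ) < n := by exact_mod_cast hn
  unfold MM
  rw [← Real.log_div (by positivity) (by positivity)]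
  apply Real.log_le_log hn'
  rw [le_div_iff₀ (by positivity)]
  rw [one_div, inv_pow, ← div_eq_mul_inv, div_le_iff₀ (by positivity), add_mul,
    inv_mul_cancel₀ (by positivity)]
  nlinarith

lemma H1_tendsto (a b : ℝ) :
    Tendsto (fun n : ℕ => H1norm (Phi a b (1 / ((n:ℝ) + 1)))) atTop (𝓝 0) := by
  refine squeeze_zero (fun n => Real.sqrt_nonneg _)
    (fun n => H1_bound a b _ (by positivity)) ?_
  have hi : Tendsto (fun n : ℕ => (MM (1 / ((n:ℝ) + 1)))⁻¹) atTop (𝓝 0) :=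
    tendsto_inv_atTop_zero.comp MM_tendsto
  have h2 : Tendsto (fun n : ℕ => √((4 + 8 * Real.pi ^ 2) * (Real.pi / 2) *
      (Real.log 2 * ((MM (1 / ((n:ℝ) + 1)))⁻¹) ^ 2 + (MM (1 / ((n:ℝ) + 1)))⁻¹ / 2)))
      atTop (𝓝 (√((4 + 8 * Real.pi ^ 2) * (Real.pi / 2) * (Real.log 2 * 0 ^ 2 + 0 / 2)))) :=
    ((((hi.pow 2).const_mul _).add (hi.div_const 2)).const_mul _).sqrt
  simp only [ne_eq, OfNat.ofNat_ne_zero, not_false_eq_true, zero_pow, mul_zero, zero_div,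
    add_zero, Real.sqrt_zero] at h2
  refine h2.congr (fun n => ?_)
  have := (MM_pos (show 0 < 1 / ((n:ℝ) + 1) by positivity)).ne'
  congr 1
  field_simp

lemma sin_per (a : ℝ) : Function.Periodic (fun x : ℝ => Real.sin (Real.pi * (x - a)) ^ 2) 1 := by
  intro x
  simp only
  rw [show Real.pi * (x + 1 - a) = Real.pi * (x - a) + Real.pi by ring, Real.sin_add_pi, neg_sq]

noncomputable def cc (a : ℝ) : AddCircle (1:ℝ) → ℝ := (sin_per a).lift

lemma cc_coe (a x : ℝ) : cc a (x : AddCircle (1:ℝ)) = Real.sin (Real.pi * (x - a)) ^ 2 :=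
  (sin_per a).lift_coe x

lemma cc_cont (a : ℝ) : Continuous (cc a) := by
  rw [(QuotientAddGroup.isQuotientMap_mk (N := AddSubgroup.zmultiples (1:ℝ))).continuous_iff]
  have : (cc a ∘ fun x : ℝ => (x : AddCircle (1:ℝ))) =
      fun x : ℝ => Real.sin (Real.pi * (x - a)) ^ 2 := funext (cc_coe a)
  change Continuous (cc a ∘ fun x : ℝ => (x : AddCircle (1:ℝ)))
  rw [this]
  fun_prop

lemma cc_nonneg (a : ℝ) (z : AddCircle (1:ℝ)) : 0 ≤ cc a z := by
  obtain ⟨x, rfl⟩ := QuotientAddGroup.mk_surjective z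
  exact (cc_coe a x).symm ▸ sq_nonneg _

lemma cc_zero (a : ℝ) (z : AddCircle (1:ℝ)) (h : cc a z = 0) : z = (a : AddCircle (1:ℝ)) := by
  obtain ⟨x, rfl⟩ := QuotientAddGroup.mk_surjective z
  have h' : Real.sin (Real.pi * (x - a)) ^ 2 = 0 := (cc_coe a x).symm.trans h
  rw [sq_eq_zero_iff, Real.sin_eq_zero_iff] at h'
  obtain ⟨n, hn⟩ := h'
  have hx : (n:ℝ) = x - a := by
    have := Real.pi_pos.ne'
    apply mul_left_cancel₀ this
    linarith
  change (x : AddCircle (1:ℝ)) = a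
  rw [← sub_eq_zero, ← AddCircle.coe_sub, AddCircle.coe_eq_zero_iff]
  exact ⟨n, by rw [← hx]; simp⟩

noncomputable def phi (a b e : ℝ) (z : T2) : ℝ := FF e (cc a z.1 + cc b z.2)

lemma FF_bound {e t : ℝ} (he : 0 < e) (ht : 0 ≤ t) : 0 ≤ FF e t ∧ FF e t ≤ 1 := by
  have hM := MM_pos he
  have hu : 0 < t + e ^ 2 := by positivity
  have he2 : 0 < e ^ 2 := by positivity
  unfold FF
  constructor
  · apply div_nonneg _ hM.le
    have := Real.log_le_log hu (show t + e ^ 2 ≤ t + e ^ 2 + 1 by linarith)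
    linarith
  · rw [div_le_one hM]
    unfold MM
    rw [← Real.log_div (by positivity) (by positivity), ← Real.log_div (by positivity) (by positivity)]
    apply Real.log_le_log (by positivity)
    rw [div_le_div_iff₀ hu he2]
    nlinarith

lemma phi_cont (a b e : ℝ) (he : 0 < e) : Continuous (phi a b e) := by
  rw [continuous_iff_continuousAt]
  intro z
  have h : Continuous (fun z : T2 => cc a z.1 + cc b z.2) :=
    ((cc_cont a).comp continuous_fst).add ((cc_cont b).comp continuous_snd)
  exact ContinuousAt.comp (g := FF e)
    (FF_contDiffAt he (add_nonneg (cc_nonneg a _) (cc_nonneg b _))).continuousAt h.continuousAt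

lemma FF_tendsto {t : ℝ} (ht : 0 < t) :
    Tendsto (fun n : ℕ => FF (1 / ((n:ℝ) + 1)) t) atTop (𝓝 0) := by
  have he : Tendsto (fun n : ℕ => (1 / ((n:ℝ) + 1))) atTop (𝓝 0) :=
    tendsto_one_div_add_atTop_nhds_zero_nat
  have h1 : Tendsto (fun n : ℕ => t + (1 / ((n:ℝ) + 1)) ^ 2) atTop (𝓝 (t + 0 ^ 2)) :=
    (he.pow 2).const_add t
  unfold FF
  exact ((h1.add_const 1).log (by positivity) |>.sub (h1.log (by positivity))).div_atTop MM_tendsto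

lemma phi_integral (a b : ℝ) (μ : Measure T2) [IsFiniteMeasure μ] :
    Tendsto (fun n : ℕ => ∫ z, phi a b (1 / ((n:ℝ) + 1)) z ∂μ) atTop
      (𝓝 (μ.real {((a : AddCircle (1:ℝ)), (b : AddCircle (1:ℝ)))})) := by
  have hms : MeasurableSet ({((a : AddCircle (1:ℝ)), (b : AddCircle (1:ℝ)))} : Set T2) :=
    measurableSet_singleton _
  rw [← integral_indicator_one hms]
  apply tendsto_integral_of_dominated_convergence (fun _ => (1:ℝ))
  · intro n
    exact (phi_cont a b _ (by positivity)).aestronglyMeasurable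
  · exact integrable_const _
  · intro n
    refine Eventually.of_forall (fun z => ?_)
    have := FF_bound (e := 1 / ((n:ℝ) + 1)) (by positivity)
      (add_nonneg (cc_nonneg a z.1) (cc_nonneg b z.2))
    unfold phi
    rw [Real.norm_eq_abs, abs_of_nonneg this.1]
    exact this.2
  · refine Eventually.of_forall (fun z => ?_)
    by_cases hz : z = ((a : AddCircle (1:ℝ)), (b : AddCircle (1:ℝ)))
    · subst hz
      simp only [Set.mem_singleton_iff, Set.indicator_of_mem, Pi.one_apply]
      refine tendsto_const_nhds.congr (fun n => ?_)
      have := (MM_pos (show 0 < 1 / ((n:ℝ) + 1) by positivity)).ne'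
      unfold phi
      simp only [cc_coe, sub_self, mul_zero, Real.sin_zero]
      unfold FF
      rw [eq_div_iff this]
      unfold MM
      simp
    · rw [Set.indicator_of_notMem (by simpa using hz)]
      apply FF_tendsto
      have ha := cc_nonneg a z.1
      have hb := cc_nonneg b z.2
      by_contra hcon
      exact hz (Prod.ext (cc_zero a _ (by linarith)) (cc_zero b _ (by linarith)))

/-- Delort's Lemma 1.2.5: a finite signed Radon measure `ω = μp - μm` on `𝕋²`
which belongs to `H⁻¹(𝕋²)` — i.e. `|∫ φ dω| ≤ C‖φ‖_{H¹}` for all smooth test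
functions `φ` — has no atoms: `ω({x₀}) = 0` for every `x₀ ∈ 𝕋²`. -/
theorem stmt5 (μp μm : Measure T2) [IsFiniteMeasure μp] [IsFiniteMeasure μm]
    (C : ℝ) (hC : 0 < C)
    (hH1 : ∀ (Φ : ℝ × ℝ → ℝ), ContDiff ℝ (⊤ : ℕ∞) Φ →
      (∀ p : ℝ × ℝ, Φ (p.1 + 1, p.2) = Φ p) →
      (∀ p : ℝ × ℝ, Φ (p.1, p.2 + 1) = Φ p) →
      ∀ φ : T2 → ℝ, (∀ p : ℝ × ℝ, φ (q2 p) = Φ p) →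
        |(∫ x, φ x ∂μp) - (∫ x, φ x ∂μm)| ≤ C * H1norm Φ) :
    ∀ x₀ : T2, μp {x₀} = μm {x₀} := by
  rintro ⟨za, zb⟩
  obtain ⟨a, rfl⟩ := QuotientAddGroup.mk_surjective za
  obtain ⟨b, rfl⟩ := QuotientAddGroup.mk_surjective zb
  have key : ∀ n : ℕ, |(∫ x, phi a b (1 / ((n:ℝ) + 1)) x ∂μp) -
      (∫ x, phi a b (1 / ((n:ℝ) + 1)) x ∂μm)| ≤ C * H1norm (Phi a b (1 / ((n:ℝ) + 1))) := by
    intro n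
    apply hH1 _ (Phi_contDiff a b _ (by positivity))
    · intro p
      have := sin_per a p.1
      simp only at this
      simp only [Phi, sq2, this]
    · intro p
      have := sin_per b p.2
      simp only at this
      simp only [Phi, sq2, this]
    · intro p
      simp only [phi, Phi, sq2, q2, cc_coe]
  have h1 := ((phi_integral a b μp).sub (phi_integral a b μm)).abs
  have h2 := (H1_tendsto a b).const_mul C
  have h3 := le_of_tendsto_of_tendsto' h1 h2 key
  rw [mul_zero] at h3
  have h4 := sub_eq_zero.1 (abs_eq_zero.1 (le_antisymm h3 (abs_nonneg _)))
  exact (measureReal_eq_measureReal_iff).1 h4
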